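/- arXiv:1710.03318 — 2 statements merged into one kernel-verified Lean document; each statement's English description precedes it below -/
import Mathlib

section
/- For the Pinchuk map 𝒫 = (P, Q) : ℝ² → ℝ², the Jacobian determinant is strictly positive at every point: det J𝒫(x, y) > 0 for all (x, y) ∈ ℝ². -/
open Filter Topology

noncomputable section

/-- `t = x·y − 1` -/
def tP (x y : ℝ) : ℝ := x * y - 1

/-- `h = t·(x·t + 1)` -/
def hP (x y : ℝ) : ℝ := tP x y * (x * tP x y + 1)

/-- `f = (x·t + 1)²·(t² + y)` -/
def fP (x y : ℝ) : ℝ := (x * tP x y + 1) ^ 2 * ((tP x y) ^ 2 + y)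

/-- First component `P = f + h` of the Pinchuk map. -/
def PP (x y : ℝ) : ℝ := fP x y + hP x y

/-- Second component `Q` of the Pinchuk map. -/
def QP (x y : ℝ) : ℝ :=
  -(tP x y) ^ 2 - 6 * tP x y * hP x y * (hP x y + 1) - 170 * fP x y * hP x y
    - 91 * (hP x y) ^ 2 - 195 * fP x y * (hP x y) ^ 2 - 69 * (hP x y) ^ 3
    - 75 * fP x y * (hP x y) ^ 3 - (75 / 4) * (hP x y) ^ 4

/-- The Pinchuk map `𝒫 = (P, Q) : ℝ² → ℝ²`. -/
def Pinchuk (z : ℝ × ℝ) : ℝ × ℝ := (PP z.1 z.2, QP z.1 z.2)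

/-- Determinant of the Jacobian matrix `J𝒫(x,y)` of the Pinchuk map at `(x, y)`. -/
def jacDetPinchuk (x y : ℝ) : ℝ :=
  deriv (fun u => PP u y) x * deriv (fun v => QP x v) y
    - deriv (fun v => PP x v) y * deriv (fun u => QP u y) x

/-!
Write `{F, G} = F_x G_y - F_y G_x`. The functions `t`, `h`, `f` are closed under this bracket,
`{t, h} = t - h`, `{t, f} = f - 3 h² - 2 h`, `{h, f} = f`, and satisfy `f (h - t) = h² (h + 1)`.
Since `Q` is a polynomial in `t`, `h`, `f`, the chain rule expresses `{P, Q}` in these three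
functions, and modulo the relation it is the sum of squares `t² + (t + f (13 + 15 h))² + f²`.
It has no zero, because `t = 0` means `x y = 1`, and then `f = y ≠ 0`.
-/

section JacobianDet

variable {𝕜 : Type*} [NontriviallyNormedField 𝕜] {F G : 𝕜 → 𝕜 → 𝕜} {x y : 𝕜}

/-- The Jacobian determinant `{F, G} = F_x G_y - F_y G_x` of the map `(F, G)` at `(x, y)`, used as
a Poisson bracket. It is built from the two partial derivatives `deriv`, so it is meaningful only
where these exist. -/
def jacobianDet (F G : 𝕜 → 𝕜 → 𝕜) (x y : 𝕜) : 𝕜 :=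
  deriv (fun u => F u y) x * deriv (fun v => G x v) y
    - deriv (fun v => F x v) y * deriv (fun u => G u y) x

theorem jacobianDet_self (F : 𝕜 → 𝕜 → 𝕜) (x y : 𝕜) : jacobianDet F F x y = 0 := by
  unfold jacobianDet
  ring

theorem jacobianDet_swap (F G : 𝕜 → 𝕜 → 𝕜) (x y : 𝕜) :
    jacobianDet G F x y = -jacobianDet F G x y := by
  unfold jacobianDet
  ring

theorem jacobianDet_eq_of_hasDerivAt {Fx Fy Gx Gy : 𝕜}
    (hFx : HasDerivAt (fun u => F u y) Fx x) (hFy : HasDerivAt (fun v => F x v) Fy y)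
    (hGx : HasDerivAt (fun u => G u y) Gx x) (hGy : HasDerivAt (fun v => G x v) Gy y) :
    jacobianDet F G x y = Fx * Gy - Fy * Gx := by
  rw [jacobianDet, hFx.deriv, hFy.deriv, hGx.deriv, hGy.deriv]

theorem jacobianDet_add_left
    (hFx : DifferentiableAt 𝕜 (fun u => F u y) x) (hFy : DifferentiableAt 𝕜 (fun v => F x v) y)
    (hGx : DifferentiableAt 𝕜 (fun u => G u y) x) (hGy : DifferentiableAt 𝕜 (fun v => G x v) y)
    (H : 𝕜 → 𝕜 → 𝕜) :
    jacobianDet (fun u v => F u v + G u v) H x y = jacobianDet F H x y + jacobianDet G H x y := by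
  simp only [jacobianDet, deriv_fun_add hFx hGx, deriv_fun_add hFy hGy]
  ring

theorem jacobianDet_comp_right {ι : Type*} [Finite ι] {g : ι → 𝕜 → 𝕜 → 𝕜}
    {Φ : (ι → 𝕜) → 𝕜} {Φ' : (ι → 𝕜) →L[𝕜] 𝕜} (F : 𝕜 → 𝕜 → 𝕜)
    (hΦ : HasFDerivAt Φ Φ' fun i => g i x y)
    (hgx : ∀ i, DifferentiableAt 𝕜 (fun u => g i u y) x)
    (hgy : ∀ i, DifferentiableAt 𝕜 (fun v => g i x v) y) :
    jacobianDet F (fun u v => Φ fun i => g i u v) x y =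
      Φ' fun i => jacobianDet F (g i) x y := by
  have := Fintype.ofFinite ι
  have hx : HasDerivAt (fun u => Φ fun i => g i u y) (Φ' fun i => deriv (fun u => g i u y) x) x :=
    hΦ.comp_hasDerivAt x (hasDerivAt_pi.2 fun i => (hgx i).hasDerivAt)
  have hy : HasDerivAt (fun v => Φ fun i => g i x v) (Φ' fun i => deriv (fun v => g i x v) y) y :=
    hΦ.comp_hasDerivAt y (hasDerivAt_pi.2 fun i => (hgy i).hasDerivAt)
  rw [jacobianDet, hx.deriv, hy.deriv, ← smul_eq_mul, ← smul_eq_mul, ← map_smul, ← map_smul,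
    ← map_sub]
  rfl

end JacobianDet

theorem hasDerivAt_tP_left (x y : ℝ) : HasDerivAt (fun u => tP u y) y x := by
  simpa [tP] using ((hasDerivAt_id x).mul_const y).sub_const 1

theorem hasDerivAt_tP_right (x y : ℝ) : HasDerivAt (fun v => tP x v) x y := by
  simpa [tP] using ((hasDerivAt_id y).const_mul x).sub_const 1

theorem hasDerivAt_hP_left (x y : ℝ) :
    HasDerivAt (fun u => hP u y) (tP x y ^ 2 + (2 * x * tP x y + 1) * y) x := by
  have ht := hasDerivAt_tP_left x y
  refine (ht.mul (((hasDerivAt_id x).mul ht).add_const 1)).congr_deriv ?_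
  simp only [id, Pi.mul_apply]
  ring

theorem hasDerivAt_hP_right (x y : ℝ) :
    HasDerivAt (fun v => hP x v) ((2 * x * tP x y + 1) * x) y := by
  have ht := hasDerivAt_tP_right x y
  refine (ht.mul ((ht.const_mul x).add_const 1)).congr_deriv ?_
  ring

theorem hasDerivAt_fP_left (x y : ℝ) :
    HasDerivAt (fun u => fP u y)
      (2 * (x * tP x y + 1) * (tP x y + x * y) * (tP x y ^ 2 + y)
        + (x * tP x y + 1) ^ 2 * (2 * tP x y * y)) x := by
  have ht := hasDerivAt_tP_left x y
  refine (((((hasDerivAt_id x).mul ht).add_const 1).pow 2).mul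
    ((ht.pow 2).add_const y)).congr_deriv ?_
  simp

theorem hasDerivAt_fP_right (x y : ℝ) :
    HasDerivAt (fun v => fP x v)
      (2 * (x * tP x y + 1) * x ^ 2 * (tP x y ^ 2 + y)
        + (x * tP x y + 1) ^ 2 * (2 * tP x y * x + 1)) y := by
  have ht := hasDerivAt_tP_right x y
  refine ((((ht.const_mul x).add_const 1).pow 2).mul
    ((ht.pow 2).add (hasDerivAt_id y))).congr_deriv ?_
  simp [sq]

theorem jacobianDet_tP_hP (x y : ℝ) : jacobianDet tP hP x y = tP x y - hP x y := by
  rw [jacobianDet_eq_of_hasDerivAt (hasDerivAt_tP_left x y) (hasDerivAt_tP_right x y)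
    (hasDerivAt_hP_left x y) (hasDerivAt_hP_right x y), hP]
  ring

theorem jacobianDet_tP_fP (x y : ℝ) :
    jacobianDet tP fP x y = fP x y - 3 * hP x y ^ 2 - 2 * hP x y := by
  rw [jacobianDet_eq_of_hasDerivAt (hasDerivAt_tP_left x y) (hasDerivAt_tP_right x y)
    (hasDerivAt_fP_left x y) (hasDerivAt_fP_right x y)]
  simp only [fP, hP, tP]
  ring

theorem jacobianDet_hP_fP (x y : ℝ) : jacobianDet hP fP x y = fP x y := by
  rw [jacobianDet_eq_of_hasDerivAt (hasDerivAt_hP_left x y) (hasDerivAt_hP_right x y)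
    (hasDerivAt_fP_left x y) (hasDerivAt_fP_right x y)]
  simp only [fP, tP]
  ring

theorem fP_mul_hP_sub_tP (x y : ℝ) :
    fP x y * (hP x y - tP x y) = hP x y ^ 2 * (hP x y + 1) := by
  simp only [fP, hP, tP]
  ring

theorem jacobianDet_PP_left (G : ℝ → ℝ → ℝ) (x y : ℝ) :
    jacobianDet PP G x y = jacobianDet fP G x y + jacobianDet hP G x y :=
  jacobianDet_add_left (hasDerivAt_fP_left x y).differentiableAt
    (hasDerivAt_fP_right x y).differentiableAt (hasDerivAt_hP_left x y).differentiableAt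
    (hasDerivAt_hP_right x y).differentiableAt G

theorem jacobianDet_PP_tP (x y : ℝ) :
    jacobianDet PP tP x y = 3 * hP x y * (hP x y + 1) - fP x y - tP x y := by
  rw [jacobianDet_PP_left, jacobianDet_swap tP fP, jacobianDet_swap tP hP, jacobianDet_tP_fP,
    jacobianDet_tP_hP]
  ring

theorem jacobianDet_PP_hP (x y : ℝ) : jacobianDet PP hP x y = -fP x y := by
  rw [jacobianDet_PP_left, jacobianDet_swap hP fP, jacobianDet_hP_fP, jacobianDet_self, add_zero]

theorem jacobianDet_PP_fP (x y : ℝ) : jacobianDet PP fP x y = fP x y := by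
  rw [jacobianDet_PP_left, jacobianDet_self, jacobianDet_hP_fP, zero_add]

/-- `Q` as a polynomial in `t = p 0`, `h = p 1`, `f = p 2`, so that the chain rule
`jacobianDet_comp_right` applies to it. -/
def pinchukQ (p : Fin 3 → ℝ) : ℝ :=
  -p 0 ^ 2 - 6 * p 0 * p 1 * (p 1 + 1) - 170 * p 2 * p 1 - 91 * p 1 ^ 2 - 195 * p 2 * p 1 ^ 2
    - 69 * p 1 ^ 3 - 75 * p 2 * p 1 ^ 3 - (75 / 4) * p 1 ^ 4

open ContinuousLinearMap in
theorem hasFDerivAt_pinchukQ (p : Fin 3 → ℝ) :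
    HasFDerivAt pinchukQ
      ((-2 * p 0 - 6 * p 1 * (p 1 + 1)) • (proj 0 : (Fin 3 → ℝ) →L[ℝ] ℝ)
        + (-6 * p 0 * (2 * p 1 + 1) - 170 * p 2 - 182 * p 1 - 390 * p 2 * p 1 - 207 * p 1 ^ 2
          - 225 * p 2 * p 1 ^ 2 - 75 * p 1 ^ 3) • proj 1
        + (-170 * p 1 - 195 * p 1 ^ 2 - 75 * p 1 ^ 3) • proj 2) p := by
  have ht := hasFDerivAt_apply (𝕜 := ℝ) 0 p
  have hh := hasFDerivAt_apply (𝕜 := ℝ) 1 p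
  have hf := hasFDerivAt_apply (𝕜 := ℝ) 2 p
  refine ((((((((ht.pow 2).neg.sub (((ht.const_mul 6).mul hh).mul (hh.add_const 1))).sub
    ((hf.const_mul 170).mul hh)).sub ((hh.pow 2).const_mul 91)).sub
    ((hf.const_mul 195).mul (hh.pow 2))).sub ((hh.pow 3).const_mul 69)).sub
    ((hf.const_mul 75).mul (hh.pow 3))).sub ((hh.pow 4).const_mul (75 / 4))).congr_fderiv ?_
  ext v
  simp only [Nat.add_one_sub_one, pow_one, nsmul_eq_mul, Nat.cast_ofNat, Pi.mul_apply, smul_add,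
    sub_apply, neg_apply, smul_apply, proj_apply, smul_eq_mul, add_apply, neg_mul]
  ring

theorem jacobianDet_QP_right (F : ℝ → ℝ → ℝ) (x y : ℝ) :
    jacobianDet F QP x y =
      (-2 * tP x y - 6 * hP x y * (hP x y + 1)) * jacobianDet F tP x y
        + (-6 * tP x y * (2 * hP x y + 1) - 170 * fP x y - 182 * hP x y - 390 * fP x y * hP x y
          - 207 * hP x y ^ 2 - 225 * fP x y * hP x y ^ 2 - 75 * hP x y ^ 3) * jacobianDet F hP x y
        + (-170 * hP x y - 195 * hP x y ^ 2 - 75 * hP x y ^ 3) * jacobianDet F fP x y := by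
  refine jacobianDet_comp_right (g := ![tP, hP, fP]) F (hasFDerivAt_pinchukQ _) ?_ ?_
  · simp only [Fin.forall_fin_succ]
    exact ⟨(hasDerivAt_tP_left x y).differentiableAt, (hasDerivAt_hP_left x y).differentiableAt,
      (hasDerivAt_fP_left x y).differentiableAt, nofun⟩
  · simp only [Fin.forall_fin_succ]
    exact ⟨(hasDerivAt_tP_right x y).differentiableAt, (hasDerivAt_hP_right x y).differentiableAt,
      (hasDerivAt_fP_right x y).differentiableAt, nofun⟩

theorem jacDetPinchuk_eq_sum_sq (x y : ℝ) :
    jacDetPinchuk x y =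
      tP x y ^ 2 + (tP x y + fP x y * (13 + 15 * hP x y)) ^ 2 + fP x y ^ 2 := by
  change jacobianDet PP QP x y = _
  rw [jacobianDet_QP_right, jacobianDet_PP_tP, jacobianDet_PP_hP, jacobianDet_PP_fP]
  -- The relation trades the term `-18 h² (h + 1)²`, the only one free of `t` and `f`, for
  -- a multiple of `f`.
  linear_combination 18 * (hP x y + 1) * fP_mul_hP_sub_tP x y

theorem fP_ne_zero_of_tP_eq_zero {x y : ℝ} (ht : tP x y = 0) : fP x y ≠ 0 := by
  have hxy : x * y = 1 := sub_eq_zero.1 ht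
  have hf : fP x y = y := by simp [fP, ht]
  rw [hf]
  exact right_ne_zero_of_mul_eq_one hxy

/-- the Jacobian determinant of the Pinchuk map is strictly positive
at every point of `ℝ²`. -/
theorem pinchuk_jacobian_pos (x y : ℝ) : 0 < jacDetPinchuk x y := by
  rw [jacDetPinchuk_eq_sum_sq]
  by_cases ht : tP x y = 0
  · have hf : fP x y ≠ 0 := fP_ne_zero_of_tP_eq_zero ht
    positivity
  · positivity
end
end

section
/- Let F : ℂ³ → ℂ³ be the polynomial map F(x, y, z) = (x, y, (x² + y²)·z). Then the asymptotic variety of F is the algebraic hypersurface S_F = {(α, β, γ) ∈ ℂ³ : α² + β² = 0}. -/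
/-!
View `F` as the map `(x, v) ↦ (x, q x • v)` with `x` in the base `ℂ²` and `v` in the fibre `ℂ`.
Where `q ≠ 0` it has the continuous inverse `(x, w) ↦ (x, (q x)⁻¹ • w)`, so no sequence escaping
to infinity has images converging to a point over `x`. Over a zero `x` of `q`, the whole fibre
collapses to `(x, 0)`, which is thus an asymptotic value; and for `w ≠ 0` the points
`(x', (q x')⁻¹ • w)`, with `q x' ≠ 0` and `x' → x`, escape to infinity while their images `(x', w)`
converge to `(x, w)`. Such `x'` exist because the zeros of `q = x² + y²` have dense complement.
-/

open Filter Topology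

noncomputable section

/-- The polynomial map `F : ℂ³ → ℂ³`, `F(x, y, z) = (x, y, (x² + y²)·z)`. -/
def Fc (w : ℂ × ℂ × ℂ) : ℂ × ℂ × ℂ := (w.1, w.2.1, (w.1 ^ 2 + w.2.1 ^ 2) * w.2.2)

open Bornology

section AsymptoticVariety

variable {E E' Y Z : Type*}

/-- The asymptotic variety `S_F` of a map `F`: the limits of `F` along sequences escaping to
infinity. Escaping is expressed by the bornology; in a normed space it means `‖ξ k‖ → ∞`. -/
def asymptoticVariety [Bornology E] [TopologicalSpace Y] (F : E → Y) : Set Y :=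
  {y | ∃ ξ : ℕ → E, Tendsto ξ atTop (cobounded E) ∧ Tendsto (fun k => F (ξ k)) atTop (𝓝 y)}

theorem mem_asymptoticVariety_of_tendsto [Bornology E] [TopologicalSpace Y] {F : E → Y} {y : Y}
    {ι : Type*} {l : Filter ι} [l.NeBot] [l.IsCountablyGenerated] {g : ι → E}
    (hg : Tendsto g l (cobounded E)) (hF : Tendsto (fun i => F (g i)) l (𝓝 y)) :
    y ∈ asymptoticVariety F :=
  let ⟨u, hu⟩ := l.exists_seq_tendsto
  ⟨g ∘ u, hg.comp hu, hF.comp hu⟩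

theorem notMem_asymptoticVariety_of_eventually_leftInverse [PseudoMetricSpace E]
    [TopologicalSpace Y] {F : E → Y} {G : Y → E} {y : Y} (hG : ContinuousAt G y)
    (hGF : ∀ᶠ x in comap F (𝓝 y), G (F x) = x) : y ∉ asymptoticVariety F := by
  rintro ⟨ξ, hξ, hFξ⟩
  have hGFξ : ∀ᶠ k in atTop, G (F (ξ k)) = ξ k := (tendsto_comap_iff.2 hFξ).eventually hGF
  have hξ_lim : Tendsto ξ atTop (𝓝 (G y)) := (hG.tendsto.comp hFξ).congr' hGFξ
  exact hξ_lim.not_tendsto (Metric.disjoint_nhds_cobounded _) hξ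

theorem asymptoticVariety_comp_isometryEquiv [PseudoMetricSpace E] [PseudoMetricSpace E']
    [TopologicalSpace Y] (F : E → Y) (e : E' ≃ᵢ E) :
    asymptoticVariety (F ∘ e) = asymptoticVariety F := by
  ext y
  constructor
  · rintro ⟨ξ, hξ, hF⟩
    exact ⟨e ∘ ξ, e.isometry.antilipschitz.tendsto_cobounded.comp hξ, hF⟩
  · rintro ⟨ξ, hξ, hF⟩
    exact ⟨e.symm ∘ ξ, e.symm.isometry.antilipschitz.tendsto_cobounded.comp hξ, by simpa using hF⟩

theorem asymptoticVariety_homeomorph_comp [Bornology E] [TopologicalSpace Y] [TopologicalSpace Z]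
    (h : Y ≃ₜ Z) (F : E → Y) :
    asymptoticVariety (h ∘ F) = h.symm ⁻¹' asymptoticVariety F := by
  ext z
  simp [asymptoticVariety, h.symm.isInducing.tendsto_nhds_iff, Function.comp_def]

end AsymptoticVariety

section FiberwiseSMul

variable {X 𝕜 V : Type*}

/-- The map `(x, v) ↦ (x, q x • v)` of the trivial bundle `X × V` that scales the fibre over `x` by
`q x`. -/
def fiberwiseSMul [SMul 𝕜 V] (q : X → 𝕜) (p : X × V) : X × V := (p.1, q p.1 • p.2)

theorem tendsto_prodMk_cobounded [Bornology X] [Bornology V] {ι : Type*} {l : Filter ι}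
    (f : ι → X) {g : ι → V} (hg : Tendsto g l (cobounded V)) :
    Tendsto (fun i => (f i, g i)) l (cobounded (X × V)) := by
  rw [cobounded_prod]
  have h_snd : Tendsto (fun i => (f i, g i)) l (comap Prod.snd (cobounded V)) :=
    tendsto_comap_iff.2 hg
  exact h_snd.mono_right le_sup_right

variable [NontriviallyNormedField 𝕜] [NormedAddCommGroup V] [NormedSpace 𝕜 V]

theorem tendsto_smul_const_cobounded {v : V} (hv : v ≠ 0) :
    Tendsto (fun c : 𝕜 => c • v) (cobounded 𝕜) (cobounded V) := by
  simp only [← tendsto_norm_atTop_iff_cobounded, norm_smul]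
  exact tendsto_norm_cobounded_atTop.atTop_mul_const (norm_pos_iff.2 hv)

variable [PseudoMetricSpace X] {q : X → 𝕜} {x : X}

theorem notMem_asymptoticVariety_fiberwiseSMul (hq : ContinuousAt q x) (hx : q x ≠ 0) (w : V) :
    (x, w) ∉ asymptoticVariety (fiberwiseSMul (V := V) q) := by
  have hq_fst : ContinuousAt (fun p : X × V => q p.1) (x, w) :=
    ContinuousAt.comp (x := (x, w)) hq continuousAt_fst
  have h_inv : ContinuousAt (fun p : X × V => (p.1, (q p.1)⁻¹ • p.2)) (x, w) :=
    continuousAt_fst.prodMk ((hq_fst.inv₀ hx).smul continuousAt_snd)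
  refine notMem_asymptoticVariety_of_eventually_leftInverse h_inv ?_
  filter_upwards [tendsto_comap.eventually (hq_fst.eventually_ne hx)] with p hp
  exact Prod.ext rfl (inv_smul_smul₀ hp p.2)

theorem mk_zero_mem_asymptoticVariety_fiberwiseSMul [Nontrivial V] (hx : q x = 0) :
    (x, 0) ∈ asymptoticVariety (fiberwiseSMul (V := V) q) := by
  have : (cobounded V).NeBot := NormedSpace.cobounded_neBot 𝕜 V
  have : (cobounded V).IsCountablyGenerated := comap_norm_atTop (E := V) ▸ inferInstance
  refine mem_asymptoticVariety_of_tendsto (tendsto_prodMk_cobounded (fun _ => x) tendsto_id) ?_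
  simp only [fiberwiseSMul, hx, zero_smul]
  exact tendsto_const_nhds

theorem mem_asymptoticVariety_fiberwiseSMul_of_mem_closure (hq : ContinuousAt q x) (hx : q x = 0)
    (hx_closure : x ∈ closure {x' | q x' ≠ 0}) {w : V} (hw : w ≠ 0) :
    (x, w) ∈ asymptoticVariety (fiberwiseSMul (V := V) q) := by
  have : (𝓝[{x' | q x' ≠ 0}] x).NeBot := mem_closure_iff_nhdsWithin_neBot.1 hx_closure
  have hq_ne : ∀ᶠ x' in 𝓝[{x' | q x' ≠ 0}] x, q x' ≠ 0 := eventually_mem_nhdsWithin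
  have hq_lim : Tendsto q (𝓝[{x' | q x' ≠ 0}] x) (𝓝[≠] 0) :=
    tendsto_nhdsWithin_iff.2 ⟨hx ▸ hq.tendsto.mono_left nhdsWithin_le_nhds, hq_ne⟩
  have h_escape : Tendsto (fun x' => (q x')⁻¹ • w) (𝓝[{x' | q x' ≠ 0}] x) (cobounded V) :=
    (tendsto_smul_const_cobounded hw).comp (tendsto_inv₀_nhdsNE_zero.comp hq_lim)
  refine mem_asymptoticVariety_of_tendsto (tendsto_prodMk_cobounded id h_escape) ?_
  have h_lim : Tendsto (fun x' => (x', w)) (𝓝[{x' | q x' ≠ 0}] x) (𝓝 (x, w)) :=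
    (tendsto_id.mono_right nhdsWithin_le_nhds).prodMk_nhds tendsto_const_nhds
  refine h_lim.congr' ?_
  filter_upwards [hq_ne] with x' hx'
  exact Prod.ext rfl (smul_inv_smul₀ hx' w).symm

theorem asymptoticVariety_fiberwiseSMul [Nontrivial V] (hq : Continuous q)
    (hq_dense : Dense {x | q x ≠ 0}) :
    asymptoticVariety (fiberwiseSMul (V := V) q) = {p | q p.1 = 0} := by
  ext ⟨x, w⟩
  refine ⟨fun h => by_contra fun hx =>
    notMem_asymptoticVariety_fiberwiseSMul hq.continuousAt hx w h, fun hx => ?_⟩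
  rcases eq_or_ne w 0 with rfl | hw
  · exact mk_zero_mem_asymptoticVariety_fiberwiseSMul hx
  · exact mem_asymptoticVariety_fiberwiseSMul_of_mem_closure hq.continuousAt hx (hq_dense x) hw

end FiberwiseSMul

section Density

theorem dense_of_forall_dense_slice {X Y : Type*} [TopologicalSpace X] [TopologicalSpace Y]
    {s : Set (X × Y)} (hs : ∀ y, Dense {x | (x, y) ∈ s}) : Dense s :=
  fun p => map_mem_closure (Continuous.prodMk_left p.2) (hs p.2 p.1) fun _ => id

theorem dense_setOf_eval_ne_zero {R : Type*} [CommRing R] [IsDomain R] [TopologicalSpace R]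
    [T1Space R] [∀ x : R, (𝓝[≠] x).NeBot] {P : Polynomial R} (hP : P ≠ 0) :
    Dense {x | P.eval x ≠ 0} :=
  (dense_univ.sdiff_finite (Polynomial.finite_setOfPred_isRoot hP)).mono fun _ hx => hx.2

theorem dense_setOf_sq_add_sq_ne_zero {R : Type*} [CommRing R] [IsDomain R] [TopologicalSpace R]
    [T1Space R] [∀ x : R, (𝓝[≠] x).NeBot] : Dense {p : R × R | p.1 ^ 2 + p.2 ^ 2 ≠ 0} :=
  dense_of_forall_dense_slice fun y => by
    simpa using dense_setOf_eval_ne_zero (Polynomial.X_pow_add_C_ne_zero two_pos (y ^ 2))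

end Density

theorem asymptotic_variety_complex_example_general {𝕜 : Type*} [NontriviallyNormedField 𝕜] :
    asymptoticVariety (fun w : 𝕜 × 𝕜 × 𝕜 => (w.1, w.2.1, (w.1 ^ 2 + w.2.1 ^ 2) * w.2.2)) =
      {w | w.1 ^ 2 + w.2.1 ^ 2 = 0} := by
  let q : 𝕜 × 𝕜 → 𝕜 := fun p => p.1 ^ 2 + p.2 ^ 2
  let e : (𝕜 × 𝕜) × 𝕜 ≃ᵢ 𝕜 × 𝕜 × 𝕜 := (LinearIsometryEquiv.prodAssoc 𝕜 𝕜 𝕜 𝕜).toIsometryEquiv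
  calc
    _ = asymptoticVariety (e.toHomeomorph ∘ fiberwiseSMul q ∘ e.symm) := rfl
    _ = e.symm ⁻¹' asymptoticVariety (fiberwiseSMul q) := by
      rw [asymptoticVariety_homeomorph_comp, asymptoticVariety_comp_isometryEquiv]
      rfl
    _ = e.symm ⁻¹' {p | q p.1 = 0} := by
      rw [asymptoticVariety_fiberwiseSMul (by fun_prop) dense_setOf_sq_add_sq_ne_zero]
    _ = _ := rfl

/-- the asymptotic variety of `F(x, y, z) = (x, y, (x² + y²)·z)` is
the algebraic hypersurface `{(α, β, γ) ∈ ℂ³ : α² + β² = 0}`. -/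
theorem asymptotic_variety_complex_example :
    {α : ℂ × ℂ × ℂ | ∃ ξ : ℕ → ℂ × ℂ × ℂ,
        Tendsto (fun k => ‖ξ k‖) atTop atTop ∧ Tendsto (fun k => Fc (ξ k)) atTop (𝓝 α)} =
      {α : ℂ × ℂ × ℂ | α.1 ^ 2 + α.2.1 ^ 2 = 0} := by
  simp only [tendsto_norm_atTop_iff_cobounded]
  exact asymptotic_variety_complex_example_general (𝕜 := ℂ)
end
end
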